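/- Let F : ℝ³ → ℝ³ be the polynomial map F(x, y, z) = (x, y, (x² + y²)·z). Then the asymptotic variety of F is the line S_F = {(α, β, γ) ∈ ℝ³ : α = 0 and β = 0}, which has dimension 1 (in particular it is not a hypersurface in ℝ³). -/

import Mathlib

open Filter Topology

noncomputable section

/-- The polynomial map `F : ℝ³ → ℝ³`, `F(x, y, z) = (x, y, (x² + y²)·z)`. -/
def Fr (w : ℝ × ℝ × ℝ) : ℝ × ℝ × ℝ := (w.1, w.2.1, (w.1 ^ 2 + w.2.1 ^ 2) * w.2.2)

/-!
After regrouping `ℝ³` as `ℝ² × ℝ`, the map scales the fibre over `v = (x, y)` by `q v = x² + y²`.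
Over `{q ≠ 0}` it is inverted by the continuous map dividing by `q`, so a sequence whose image
converges to a point there converges as well. The unbounded fibre over a zero of `q` is collapsed
to `0`; since `q` is nonzero on a dense set, any value `γ ≠ 0` over that zero is approached through
nearby fibres, at the points `(q v)⁻¹ γ`, which escape to infinity.
-/

section AsymptoticVariety

variable {E Y : Type*}

/-- The asymptotic variety of a map `F`: the limits of the values of `F` along sequences escaping to
infinity. In finite dimension these are the points at which a continuous `F` fails to be proper. -/
def asymptoticVariety [Norm E] [TopologicalSpace Y] (F : E → Y) : Set Y :=
  {α | ∃ ξ : ℕ → E, Tendsto (fun k => ‖ξ k‖) atTop atTop ∧ Tendsto (fun k => F (ξ k)) atTop (𝓝 α)}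

theorem asymptoticVariety_comp_of_surjective {E' : Type*} [Norm E] [Norm E'] [TopologicalSpace Y]
    (F : E → Y) {e : E' → E} (he : Function.Surjective e) (norm_e : ∀ x, ‖e x‖ = ‖x‖) :
    asymptoticVariety (F ∘ e) = asymptoticVariety F := by
  ext α
  constructor
  · rintro ⟨ξ, hξ, hF⟩
    exact ⟨e ∘ ξ, by simpa only [Function.comp_apply, norm_e] using hξ, hF⟩
  · rintro ⟨ξ, hξ, hF⟩
    choose η hη using fun k => he (ξ k)
    obtain rfl : e ∘ η = ξ := funext hη
    exact ⟨η, by simpa only [Function.comp_apply, norm_e] using hξ, hF⟩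

theorem asymptoticVariety_homeomorph_comp {Y' : Type*} [Norm E] [TopologicalSpace Y]
    [TopologicalSpace Y'] (h : Y ≃ₜ Y') (F : E → Y) :
    asymptoticVariety (h ∘ F) = h.symm ⁻¹' asymptoticVariety F := by
  ext α
  refine exists_congr fun ξ => and_congr_right fun _ => ?_
  rw [h.symm.isInducing.tendsto_nhds_iff]
  simp only [Function.comp_def, h.symm_apply_apply]

theorem notMem_asymptoticVariety_of_leftInvOn [SeminormedAddGroup E] [TopologicalSpace Y]
    {F : E → Y} {G : Y → E} {U : Set Y} {α : Y} (hU : U ∈ 𝓝 α) (hG : ContinuousAt G α)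
    (hGF : Set.LeftInvOn G F (F ⁻¹' U)) : α ∉ asymptoticVariety F := by
  rintro ⟨ξ, hξ, hF⟩
  have hξ_eq : ∀ᶠ k in atTop, G (F (ξ k)) = ξ k :=
    (hF.eventually_mem hU).mono fun _ hk => hGF hk
  have hξ_lim : Tendsto ξ atTop (𝓝 (G α)) := (hG.tendsto.comp hF).congr' hξ_eq
  exact not_tendsto_nhds_of_tendsto_atTop hξ _ hξ_lim.norm

end AsymptoticVariety

section FiberScaling

/-- The self-map of the trivial bundle `E × Z → E` that multiplies the fibre over `x` by `p x`. -/
def fiberScaling {E 𝕜 Z : Type*} [SMul 𝕜 Z] (p : E → 𝕜) (w : E × Z) : E × Z :=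
  (w.1, p w.1 • w.2)

variable {E 𝕜 Z : Type*} [SeminormedAddCommGroup E]

theorem notMem_asymptoticVariety_fiberScaling [NormedField 𝕜] [SeminormedAddCommGroup Z]
    [NormedSpace 𝕜 Z] {p : E → 𝕜} {x : E} (hp : ContinuousAt p x) (hx : p x ≠ 0) (γ : Z) :
    (x, γ) ∉ asymptoticVariety (fiberScaling (Z := Z) p) := by
  have hp_fst : ContinuousAt (fun α : E × Z => p α.1) (x, γ) :=
    ContinuousAt.comp (x := (x, γ)) hp continuousAt_fst
  refine notMem_asymptoticVariety_of_leftInvOn (G := fun α => (α.1, (p α.1)⁻¹ • α.2))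
    (hp_fst.eventually_ne hx)
    (continuousAt_fst.prodMk ((hp_fst.inv₀ hx).smul continuousAt_snd)) ?_
  rintro ⟨y, z⟩ (hy : p y ≠ 0)
  simp only [fiberScaling, inv_smul_smul₀ hy]

theorem zero_mem_asymptoticVariety_fiberScaling [NontriviallyNormedField 𝕜] [NormedAddCommGroup Z]
    [NormedSpace 𝕜 Z] [Nontrivial Z] {p : E → 𝕜} {x : E} (hx : p x = 0) :
    (x, (0 : Z)) ∈ asymptoticVariety (fiberScaling (Z := Z) p) := by
  choose z hz using fun k : ℕ => NormedSpace.exists_lt_norm 𝕜 Z k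
  refine ⟨fun k => (x, z k), ?_, ?_⟩
  · exact tendsto_atTop_mono (fun k => (hz k).le.trans (norm_snd_le (x, z k)))
      tendsto_natCast_atTop_atTop
  · simpa only [fiberScaling, hx, zero_smul] using tendsto_const_nhds

theorem mem_asymptoticVariety_fiberScaling_of_ne_zero [NormedField 𝕜] [NormedAddCommGroup Z]
    [NormedSpace 𝕜 Z] {p : E → 𝕜} {x : E} (hp : ContinuousAt p x) (hx : p x = 0)
    (hx_closure : x ∈ closure {y | p y ≠ 0}) {γ : Z} (hγ : γ ≠ 0) :
    (x, γ) ∈ asymptoticVariety (fiberScaling (Z := Z) p) := by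
  obtain ⟨y, hy_ne, hy⟩ := mem_closure_iff_seq_limit.mp hx_closure
  have hpy : Tendsto (fun k => p (y k)) atTop (𝓝[≠] 0) :=
    tendsto_nhdsWithin_iff.mpr ⟨hx ▸ hp.tendsto.comp hy, .of_forall hy_ne⟩
  have hz : Tendsto (fun k => ‖(p (y k))⁻¹ • γ‖) atTop atTop := by
    simp only [norm_smul]
    exact (tendsto_norm_inv_nhdsNE_zero_atTop.comp hpy).atTop_mul_const (norm_pos_iff.mpr hγ)
  refine ⟨fun k => (y k, (p (y k))⁻¹ • γ), tendsto_atTop_mono (fun k => norm_snd_le _) hz, ?_⟩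
  simpa only [fiberScaling, smul_inv_smul₀ (hy_ne _)] using hy.prodMk_nhds tendsto_const_nhds

theorem asymptoticVariety_fiberScaling [NontriviallyNormedField 𝕜] [NormedAddCommGroup Z]
    [NormedSpace 𝕜 Z] [Nontrivial Z] {p : E → 𝕜} (hp : Continuous p)
    (hp_dense : Dense {x | p x ≠ 0}) :
    asymptoticVariety (fiberScaling (Z := Z) p) = {α | p α.1 = 0} := by
  ext ⟨x, γ⟩
  refine ⟨fun h => ?_, fun (hx : p x = 0) => ?_⟩
  · by_contra hx
    exact notMem_asymptoticVariety_fiberScaling hp.continuousAt hx γ h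
  · rcases eq_or_ne γ 0 with rfl | hγ
    · exact zero_mem_asymptoticVariety_fiberScaling hx
    · exact mem_asymptoticVariety_fiberScaling_of_ne_zero hp.continuousAt hx (hp_dense x) hγ

end FiberScaling

theorem sq_add_sq_eq_zero_iff {R : Type*} [Ring R] [LinearOrder R] [IsStrictOrderedRing R]
    {a b : R} : a ^ 2 + b ^ 2 = 0 ↔ a = 0 ∧ b = 0 := by
  simp only [sq, mul_self_add_mul_self_eq_zero]

theorem dense_setOf_sq_add_sq_ne_zero : Dense {v : ℝ × ℝ | v.1 ^ 2 + v.2 ^ 2 ≠ 0} := by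
  convert dense_compl_singleton (0 : ℝ × ℝ) using 1
  ext v
  simp only [ne_eq, sq_add_sq_eq_zero_iff, Set.mem_ofPred_eq, Set.mem_compl_iff,
    Set.mem_singleton_iff, Prod.ext_iff, Prod.fst_zero, Prod.snd_zero]

theorem Fr_eq_fiberScaling :
    Fr = Homeomorph.prodAssoc ℝ ℝ ℝ ∘ fiberScaling (fun v : ℝ × ℝ => v.1 ^ 2 + v.2 ^ 2) ∘
      (LinearIsometryEquiv.prodAssoc ℝ ℝ ℝ ℝ).symm :=
  rfl

/-- the asymptotic variety of the real map
`F(x, y, z) = (x, y, (x² + y²)·z)` is the line `{(α, β, γ) ∈ ℝ³ : α = 0 ∧ β = 0}`,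
i.e. the one-dimensional set `{(0, 0, γ) : γ ∈ ℝ}` (not a hypersurface in `ℝ³`). -/
theorem asymptotic_variety_real_example :
    {α : ℝ × ℝ × ℝ | ∃ ξ : ℕ → ℝ × ℝ × ℝ,
        Tendsto (fun k => ‖ξ k‖) atTop atTop ∧ Tendsto (fun k => Fr (ξ k)) atTop (𝓝 α)} =
      {α : ℝ × ℝ × ℝ | α.1 = 0 ∧ α.2.1 = 0} ∧
    {α : ℝ × ℝ × ℝ | α.1 = 0 ∧ α.2.1 = 0} =
      Set.range (fun γ : ℝ => ((0 : ℝ), (0 : ℝ), γ)) := by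
  constructor
  · change asymptoticVariety Fr = _
    let e := LinearIsometryEquiv.prodAssoc ℝ ℝ ℝ ℝ
    rw [Fr_eq_fiberScaling, asymptoticVariety_homeomorph_comp,
      asymptoticVariety_comp_of_surjective _ e.symm.surjective e.symm.norm_map,
      asymptoticVariety_fiberScaling (by fun_prop) dense_setOf_sq_add_sq_ne_zero]
    ext α
    exact sq_add_sq_eq_zero_iff
  · ext ⟨a, b, c⟩
    simp [eq_comm]
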